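/- arXiv:2508.09082 — 3 statements merged into one kernel-verified Lean document; each statement's English description precedes it below -/
import Mathlib

section
/- Let n be a positive integer, R = 𝔽₂[x]/(xⁿ−1), let a, m ∈ R and set b = m·a in R. Assume that the polynomial gcd of the degree-<n representatives of a and b together with xⁿ−1 has degree at least 1 (equivalently, the GB code of (a,b) has positive dimension). Then (1, m) ∈ C₁(a,b) \ C₂(a,b); consequently d_GB(a,b) ≤ wt(m) + 1. -/
open Polynomial

noncomputable section

/-- `R2 n` is the ring `𝔽₂[x]/(xⁿ − 1)`. -/
abbrev R2 (n : ℕ) : Type := AdjoinRoot (X ^ n - 1 : (ZMod 2)[X])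

/-- The image of `x` in `𝔽₂[x]/(xⁿ − 1)`. -/
def xR (n : ℕ) : R2 n := AdjoinRoot.root _

/-- The quotient map `𝔽₂[x] → 𝔽₂[x]/(xⁿ − 1)`. -/
def mkR (n : ℕ) : (ZMod 2)[X] →+* R2 n := AdjoinRoot.mk _

lemma xR_pow_n (n : ℕ) : xR n ^ n = 1 := by
  have h : (AdjoinRoot.mk (X ^ n - 1 : (ZMod 2)[X])) (X ^ n - 1) = 0 := AdjoinRoot.mk_self
  rw [map_sub, map_pow, AdjoinRoot.mk_X, map_one, sub_eq_zero] at h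
  exact h

/-- The unique representative of degree `< n` of an element of `𝔽₂[x]/(xⁿ − 1)` (junk if `n = 0`). -/
def repP {n : ℕ} (u : R2 n) : (ZMod 2)[X] :=
  if h : n = 0 then 0
  else AdjoinRoot.modByMonicHom (by simpa using monic_X_pow_sub_C (1 : ZMod 2) h) u

/-- The Hamming weight of an element of `𝔽₂[x]/(xⁿ − 1)`: the number of nonzero coefficients
of its degree-`< n` representative. -/
def wt {n : ℕ} (u : R2 n) : ℕ := (repP u).support.card

/-- Coefficient of the degree-`< n` representative, indexed by `ℤ/n`. -/
def coeffZ {n : ℕ} (u : R2 n) (i : ZMod n) : ZMod 2 := (repP u).coeff i.val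

/-- The X-stabilizer space `C₂(a,b) = {(r·a, r·b) : r ∈ R}` of the GB code of `(a,b)`. -/
def C2set (n : ℕ) (a b : R2 n) : Set (R2 n × R2 n) := {p | ∃ r : R2 n, p = (r * a, r * b)}

/-- The space `C₁(a,b) = {(u,v) : u·b + v·a = 0}` of the GB code of `(a,b)`. -/
def C1set (n : ℕ) (a b : R2 n) : Set (R2 n × R2 n) := {p | p.1 * b + p.2 * a = 0}

/-- The (X-side) minimum distance of the GB code of `(a,b)`. -/
def dGB (n : ℕ) (a b : R2 n) : ℕ :=
  sInf {k | ∃ p ∈ C1set n a b \ C2set n a b, wt p.1 + wt p.2 = k}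

/-- `P_m(x) = 1 + x + ⋯ + x^{m−1}` as a polynomial over `𝔽₂`. -/
def PmP (m : ℕ) : (ZMod 2)[X] := ∑ i ∈ Finset.range m, X ^ i

/-- `P_m(x) = 1 + x + ⋯ + x^{m−1}` as an element of `𝔽₂[x]/(xⁿ − 1)`. -/
def PmR (n m : ℕ) : R2 n := ∑ i ∈ Finset.range m, xR n ^ i

/-- The ring endomorphism of `𝔽₂[x]/(xⁿ − 1)` induced by `x ↦ x^d`. -/
def substHom (n d : ℕ) : R2 n →+* R2 n :=
  AdjoinRoot.lift (algebraMap (ZMod 2) (R2 n)) (xR n ^ d) (by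
    simp only [eval₂_sub, eval₂_X_pow, eval₂_one]
    rw [← pow_mul, mul_comm d n, pow_mul, xR_pow_n, one_pow, sub_self])

/-- The Euclidean inner product on `𝔽₂²ⁿ`, in terms of pairs `(u₁, u₂)` of elements of
`𝔽₂[x]/(xⁿ − 1)` (representing the concatenated binary vector `(u₁ | u₂)`). -/
def eucInner (n : ℕ) (p q : R2 n × R2 n) : ZMod 2 :=
  ∑ i ∈ Finset.range n,
    ((repP p.1).coeff i * (repP q.1).coeff i + (repP p.2).coeff i * (repP q.2).coeff i)

/-- The symplectic inner product of `u₁ + w·u₂` and `v₁ + w·v₂`, i.e.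
`Σᵢ (u₁ᵢ·v₂ᵢ + u₂ᵢ·v₁ᵢ)`, in terms of the pairs `(u₁,u₂)`, `(v₁,v₂)`. -/
def sympInner (n : ℕ) (p q : R2 n × R2 n) : ZMod 2 :=
  ∑ i ∈ Finset.range n,
    ((repP p.1).coeff i * (repP q.2).coeff i + (repP p.2).coeff i * (repP q.1).coeff i)

/-- Euclidean dual of a set of (pairs representing) binary vectors of length `2n`. -/
def eucDual (n : ℕ) (S : Set (R2 n × R2 n)) : Set (R2 n × R2 n) :=
  {p | ∀ q ∈ S, eucInner n q p = 0}

/-- Symplectic dual of a set of (pairs representing) vectors of `𝔽₄ⁿ`. -/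
def sympDual (n : ℕ) (S : Set (R2 n × R2 n)) : Set (R2 n × R2 n) :=
  {p | ∀ q ∈ S, sympInner n q p = 0}

/-- Number of nonzero `𝔽₄`-coordinates of `u₁ + w·u₂`, in terms of the pair `(u₁,u₂)`. -/
def wt4 (n : ℕ) (p : R2 n × R2 n) : ℕ := ((repP p.1).support ∪ (repP p.2).support).card

/-- The `2n` binary coordinates of a pair `(u₁,u₂)`. -/
def coords {n : ℕ} (p : R2 n × R2 n) : (Fin n ⊕ Fin n) → ZMod 2 :=
  Sum.elim (fun i => (repP p.1).coeff i) (fun i => (repP p.2).coeff i)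

/-- Vertex set of the Tanner graph: check vertices `x_t` (left) and data vertices
`q_s`, `q'_s` (right). -/
def TV (n : ℕ) : Type := (ZMod n) ⊕ ((ZMod n) ⊕ (ZMod n))

/-- `trel a b v w` holds iff `v` is a check vertex `x_t`, `w` is a data vertex, and they are
connected: `x_t ~ q_s` iff `a_{s−t} = 1`, and `x_t ~ q'_s` iff `b_{s−t} = 1`. -/
def trel {n : ℕ} (a b : R2 n) (v w : TV n) : Prop :=
  ∃ t s : ZMod n, v = Sum.inl t ∧
    ((w = Sum.inr (Sum.inl s) ∧ coeffZ a (s - t) = 1) ∨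
     (w = Sum.inr (Sum.inr s) ∧ coeffZ b (s - t) = 1))

/-- The Tanner graph `T(a,b)` of the GB code of `(a,b)`. -/
def tanner (n : ℕ) (a b : R2 n) : SimpleGraph (TV n) where
  Adj v w := trel a b v w ∨ trel a b w v
  symm := ⟨fun v w h => Or.symm h⟩
  loopless := by
    constructor
    rintro v (⟨t, s, hv, hw⟩ | ⟨t, s, hv, hw⟩) <;>
      rcases hw with ⟨hw, -⟩ | ⟨hw, -⟩ <;> (subst hv; simp at hw)

end

noncomputable section

lemma monic_X_pow_sub_one {n : ℕ} (hn : 0 < n) : (X ^ n - 1 : (ZMod 2)[X]).Monic := by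
  simpa using monic_X_pow_sub_C (1 : ZMod 2) hn.ne'

lemma mk_repP {n : ℕ} (hn : 0 < n) (u : R2 n) : AdjoinRoot.mk (X ^ n - 1) (repP u) = u := by
  rw [repP, dif_neg hn.ne']
  exact AdjoinRoot.mk_leftInverse (monic_X_pow_sub_one hn) u

lemma repP_one {n : ℕ} (hn : 0 < n) : repP (1 : R2 n) = 1 := by
  rw [repP, dif_neg hn.ne', ← map_one (AdjoinRoot.mk (X ^ n - 1 : (ZMod 2)[X])),
    AdjoinRoot.modByMonicHom_mk, modByMonic_eq_self_iff (monic_X_pow_sub_one hn), degree_one,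
    ← C_1, degree_X_pow_sub_C hn]
  exact_mod_cast hn

lemma wt_one {n : ℕ} (hn : 0 < n) : wt (1 : R2 n) = 1 := by
  rw [wt, repP_one hn, ← C_1, support_C one_ne_zero, Finset.card_singleton]

/-- A common divisor of `xⁿ − 1` and the representative of a unit is a unit. -/
lemma isUnit_of_dvd_repP {n : ℕ} (hn : 0 < n) {a : R2 n} (ha : IsUnit a) {g : (ZMod 2)[X]}
    (hga : g ∣ repP a) (hg : g ∣ X ^ n - 1) : IsUnit g := by
  obtain ⟨r, hr⟩ := ha.exists_left_inv
  have h : (X ^ n - 1 : (ZMod 2)[X]) ∣ repP r * repP a - 1 := by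
    rw [← AdjoinRoot.mk_eq_zero, map_sub, map_mul, mk_repP hn, mk_repP hn, hr, map_one, sub_self]
  exact isUnit_of_dvd_one ((dvd_sub_right (hga.mul_left _)).1 (hg.trans h))

/-- The ring `𝔽₂[x]/(xⁿ − 1)` has characteristic two. -/
lemma add_self_eq_zero_R2 {n : ℕ} (u : R2 n) : u + u = 0 := by
  rw [← two_smul (ZMod 2) u, show (2 : ZMod 2) = 0 from rfl, zero_smul]

/-- Let `a, m ∈ R = 𝔽₂[x]/(xⁿ−1)` and `b = m·a`.  If the polynomial gcd of
the degree-`< n` representatives of `a` and `b` together with `xⁿ−1` has degree at least `1`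
(equivalently the GB code of `(a,b)` has positive dimension), then
`(1, m) ∈ C₁(a,b) \ C₂(a,b)`; consequently `d_GB(a,b) ≤ wt(m) + 1`. -/
theorem stmt_2 (n : ℕ) (hn : 0 < n) (a m b : R2 n) (hb : b = m * a)
    (hdim : 1 ≤ (EuclideanDomain.gcd (EuclideanDomain.gcd (repP a) (repP b))
      (X ^ n - 1 : (ZMod 2)[X])).natDegree) :
    ((1 : R2 n), m) ∈ C1set n a b \ C2set n a b ∧ dGB n a b ≤ wt m + 1 := by
  have hmem : ((1 : R2 n), m) ∈ C1set n a b \ C2set n a b := by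
    refine ⟨?_, ?_⟩
    · change 1 * b + m * a = 0
      rw [one_mul, hb, add_self_eq_zero_R2]
    · rintro ⟨r, hr⟩
      have ha : IsUnit a := IsUnit.of_mul_eq_one_right r (congrArg Prod.fst hr).symm
      have hg := isUnit_of_dvd_repP hn ha
        ((EuclideanDomain.gcd_dvd_left _ _).trans (EuclideanDomain.gcd_dvd_left (repP a) (repP b)))
        (EuclideanDomain.gcd_dvd_right _ (X ^ n - 1 : (ZMod 2)[X]))
      rw [natDegree_eq_zero_of_isUnit hg] at hdim
      exact absurd hdim (by norm_num)
  refine ⟨hmem, Nat.sInf_le ⟨_, hmem, ?_⟩⟩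
  rw [wt_one hn, add_comm]

end
end

section
/- Let d be a positive odd integer and n = (d²+1)/2. (1) In R = 𝔽₂[x]/(xⁿ−1) one has P_d(x) · (x·P_d(x^d)) = 1, where P_d(x^d) = Σ_{i=0}^{d−1} x^{d·i}; the same identity P_d(x) · (x·P_d(x^d)) ≡ 1 holds modulo P_n(x), i.e., in 𝔽₂[x]/(P_n(x)); moreover the element x·P_d(x^d) of R has weight exactly d. (2) In 𝔽₂[x] one has the exact polynomial identity P_n(x) = P_d(x)·(1 + x^d + x^{2d} + ⋯ + x^{d·((d−1)/2 − 1)}) + (x^{d(d−1)/2} + x^{d(d−1)/2 + 1} + ⋯ + x^{n−1}). -/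
open Polynomial

noncomputable section

/-- Splitting `0, …, ab - 1` into `b` consecutive blocks of length `a`. -/
lemma geom_sum_mul_geom_sum_pow {A : Type*} [CommSemiring A] (x : A) (a b : ℕ) :
    (∑ i ∈ Finset.range a, x ^ i) * ∑ i ∈ Finset.range b, x ^ (a * i) =
      ∑ i ∈ Finset.range (a * b), x ^ i := by
  induction b with
  | zero => simp
  | succ b ih =>
    rw [Finset.sum_range_succ, mul_add, ih, Nat.mul_succ, Finset.sum_range_add, Finset.sum_mul]
    simp only [pow_add, mul_comm]

lemma PmP_mul_X_mul_geom_sum {d n : ℕ} (hn : 2 * n = d ^ 2 + 1) :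
    PmP d * (X * ∑ i ∈ Finset.range d, (X : (ZMod 2)[X]) ^ (d * i)) =
      PmP n * (X ^ n - 1) + 1 := by
  have hshift : X * PmP (d * d) + 1 = PmP (2 * n) := by
    rw [hn, sq, PmP, PmP, Finset.sum_range_succ', Finset.mul_sum]
    simp only [pow_succ', pow_zero]
  have hdouble : PmP (2 * n) = PmP n * (X ^ n + 1) := by
    rw [two_mul, PmP, PmP, Finset.sum_range_add, mul_add, mul_one, add_comm, Finset.sum_mul]
    simp only [pow_add, mul_comm]
  have hprod : PmP d * ∑ i ∈ Finset.range d, (X : (ZMod 2)[X]) ^ (d * i) = PmP (d * d) :=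
    geom_sum_mul_geom_sum_pow X d d
  rw [mul_left_comm, hprod, CharTwo.sub_eq_add, ← hdouble, ← hshift, add_assoc,
    CharTwo.add_self_eq_zero, add_zero]

lemma support_sum_X_pow {A : Type*} [Semiring A] [Nontrivial A] (s : Finset ℕ) :
    (∑ k ∈ s, (X : A[X]) ^ k).support = s := by
  ext k
  simp [coeff_X_pow]

lemma wt_sum_xR_pow {n : ℕ} {s : Finset ℕ} (hs : ∀ k ∈ s, k < n) :
    wt (∑ k ∈ s, xR n ^ k) = s.card := by
  rcases eq_or_ne n 0 with rfl | hn
  · have : s = ∅ := Finset.eq_empty_of_forall_notMem fun k hk => by simpa using hs k hk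
    simp [this, wt, repP]
  have hmonic : (X ^ n - 1 : (ZMod 2)[X]).Monic := by
    simpa using monic_X_pow_sub_C (1 : ZMod 2) hn
  have hdegree : (X ^ n - 1 : (ZMod 2)[X]).degree = n := by
    simpa using degree_X_pow_sub_C (Nat.pos_of_ne_zero hn) (1 : ZMod 2)
  have hrep : repP (∑ k ∈ s, xR n ^ k) = ∑ k ∈ s, (X : (ZMod 2)[X]) ^ k := by
    have hmk : ∑ k ∈ s, xR n ^ k =
        AdjoinRoot.mk (X ^ n - 1) (∑ k ∈ s, (X : (ZMod 2)[X]) ^ k) := by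
      simp [xR]
    rw [hmk, repP, dif_neg hn, AdjoinRoot.modByMonicHom_mk, modByMonic_eq_self_iff hmonic, hdegree,
      degree_lt_iff_coeff_zero]
    intro k hk
    rw [← notMem_support_iff, support_sum_X_pow]
    exact fun hks => (hs k hks).not_ge hk
  rw [wt, hrep, support_sum_X_pow]

lemma wt_xR_mul_geom_sum {d n : ℕ} (hn : 2 * n = d ^ 2 + 1) :
    wt (xR n * ∑ i ∈ Finset.range d, xR n ^ (d * i)) = d := by
  have hpos : 0 < n := by lia
  have hle : d ≤ n := by nlinarith [sq_nonneg ((d : ℤ) - 1)]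
  have hcop : Nat.Coprime n d := by
    have h : IsCoprime (n : ℤ) d := ⟨2, -d, by push_cast [← @Nat.cast_inj ℤ] at hn; linarith⟩
    exact Nat.isCoprime_iff_coprime.mp h
  have hinj : Set.InjOn (fun i => (d * i + 1) % n) (Finset.range d) := by
    intro i hi j hj hij
    have hmod : i ≡ j [MOD n] :=
      Nat.ModEq.cancel_left_of_coprime hcop (Nat.ModEq.add_right_cancel' 1 hij)
    simp only [Finset.coe_range, Set.mem_Iio] at hi hj
    exact hmod.eq_of_lt_of_lt (by lia) (by lia)
  have hsum : xR n * ∑ i ∈ Finset.range d, xR n ^ (d * i) =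
      ∑ k ∈ (Finset.range d).image fun i => (d * i + 1) % n, xR n ^ k := by
    rw [Finset.sum_image hinj, Finset.mul_sum]
    refine Finset.sum_congr rfl fun i _ => ?_
    rw [← pow_succ', pow_eq_pow_mod _ (xR_pow_n n)]
  rw [hsum, wt_sum_xR_pow, Finset.card_image_of_injOn hinj, Finset.card_range]
  simp only [Finset.mem_image, forall_exists_index, and_imp]
  rintro k i - rfl
  exact Nat.mod_lt _ hpos

/-- For odd `d > 0` and `n = (d²+1)/2` (i.e. `2n = d² + 1`):
(1) in `R = 𝔽₂[x]/(xⁿ−1)` one has `P_d(x)·(x·P_d(x^d)) = 1` where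
`P_d(x^d) = Σ_{i<d} x^{d·i}`; the same identity holds in `𝔽₂[x]/(P_n(x))`; moreover
`x·P_d(x^d)` has weight exactly `d` in `R`.
(2) In `𝔽₂[x]` one has the exact identity
`P_n = P_d·(1 + x^d + ⋯ + x^{d((d−1)/2−1)}) + (x^{d(d−1)/2} + ⋯ + x^{n−1})`. -/
theorem stmt_6 (d n : ℕ) (hd : Odd d) (hd0 : 0 < d) (hn : 2 * n = d ^ 2 + 1) :
    PmR n d * (xR n * ∑ i ∈ Finset.range d, xR n ^ (d * i)) = 1 ∧
    AdjoinRoot.mk (PmP n) (PmP d) *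
        AdjoinRoot.mk (PmP n) (X * ∑ i ∈ Finset.range d, (X : (ZMod 2)[X]) ^ (d * i)) = 1 ∧
    wt (xR n * ∑ i ∈ Finset.range d, xR n ^ (d * i)) = d ∧
    PmP n = PmP d * (∑ i ∈ Finset.range ((d - 1) / 2), (X : (ZMod 2)[X]) ^ (d * i)) +
        ∑ i ∈ Finset.Ico (d * ((d - 1) / 2)) n, (X : (ZMod 2)[X]) ^ i := by
  refine ⟨?_, ?_, wt_xR_mul_geom_sum hn, ?_⟩
  · have h := congrArg (mkR n) (PmP_mul_X_mul_geom_sum hn)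
    have hX : mkR n X = xR n := AdjoinRoot.mk_X
    simpa [PmP, PmR, hX, xR_pow_n] using h
  · rw [← map_mul, PmP_mul_X_mul_geom_sum hn, map_add, map_mul, AdjoinRoot.mk_self, zero_mul,
      zero_add, map_one]
  · have hle : d * ((d - 1) / 2) ≤ n := by
      obtain ⟨k, rfl⟩ := hd
      have : (2 * k + 1 - 1) / 2 = k := by lia
      rw [this]
      nlinarith
    rw [PmP, PmP, geom_sum_mul_geom_sum_pow, Finset.sum_range_add_sum_Ico _ hle]

end
end

section
/- Let d ≥ 3 be odd, n = (d²+1)/2, and in R = 𝔽₂[x]/(xⁿ−1) set a = 1+x, b = (1+x)·P_d(x), u(x) = 1 + x^d + ⋯ + x^{d·((d−1)/2 − 1)}, and v(x) = x^{n−(d+1)/2} + ⋯ + x^{n−1}. Then (1, P_d(x)) + (u, v) + (x·v(x^d), u(x^d)) ∈ C₂(a,b) (so (1, P_d) represents the logical class IX = XI·XX), and every element of the coset (1, P_d(x)) + C₂(a,b) has weight at least d+1; hence the minimum weight in this coset equals d+1, attained by (1, P_d(x)). -/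
open Polynomial

section Weight

variable {n : ℕ}

lemma monic_X_pow_sub_one_zmod_two (hn : n ≠ 0) : (X ^ n - 1 : (ZMod 2)[X]).Monic := by
  simpa using monic_X_pow_sub_C (1 : ZMod 2) hn

lemma mkR_repP (hn : n ≠ 0) (f : R2 n) : mkR n (repP f) = f := by
  rw [repP, dif_neg hn]
  exact AdjoinRoot.mk_leftInverse (monic_X_pow_sub_one_zmod_two hn) f

lemma repP_mkR_of_degree_lt (hn : n ≠ 0) {p : (ZMod 2)[X]} (hp : p.degree < n) :
    repP (mkR n p) = p := by
  have hdeg : (X ^ n - 1 : (ZMod 2)[X]).degree = n := by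
    simpa using degree_X_pow_sub_C (Nat.pos_of_ne_zero hn) (1 : ZMod 2)
  rw [repP, dif_neg hn]
  change AdjoinRoot.modByMonicHom _ (AdjoinRoot.mk _ p) = p
  rw [AdjoinRoot.modByMonicHom_mk,
    (modByMonic_eq_self_iff (monic_X_pow_sub_one_zmod_two hn)).2 (by rwa [hdeg])]

lemma mkR_X : mkR n X = xR n := AdjoinRoot.mk_X

lemma xR_pow_eq_of_modEq {i j : ℕ} (h : i ≡ j [MOD n]) : xR n ^ i = xR n ^ j :=
  pow_eq_pow_of_modEq h (xR_pow_n n)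

lemma wt_zero : wt (0 : R2 n) = 0 := by
  unfold wt repP
  split <;> simp

lemma wt_add_le (f g : R2 n) : wt (f + g) ≤ wt f + wt g := by
  classical
  by_cases hn : n = 0
  · simp [wt, repP, hn]
  have h : repP (f + g) = repP f + repP g := by simp [repP, hn]
  unfold wt
  rw [h]
  exact (Finset.card_le_card support_add).trans (Finset.card_union_le _ _)

lemma wt_xR_pow_le (k : ℕ) : wt (xR n ^ k) ≤ 1 := by
  by_cases hn : n = 0
  · simp [wt, repP, hn]
  have hk : k % n < n := Nat.mod_lt _ (Nat.pos_of_ne_zero hn)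
  have h : repP (xR n ^ k) = X ^ (k % n) := by
    rw [xR_pow_eq_of_modEq (Nat.mod_modEq k n).symm, ← mkR_X, ← map_pow]
    exact repP_mkR_of_degree_lt hn (by rw [degree_X_pow]; exact_mod_cast hk)
  unfold wt
  rw [h]
  exact card_support_le_one_iff_monomial.2 ⟨_, 1, (monomial_one_right_eq_X_pow _).symm⟩

lemma wt_sum_xR_pow_le {ι : Type*} (s : Finset ι) (e : ι → ℕ) :
    wt (∑ i ∈ s, xR n ^ e i) ≤ s.card := by
  refine (Finset.le_sum_of_subadditive wt wt_zero.le wt_add_le s _).trans ?_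
  simpa using Finset.sum_le_sum fun i (_ : i ∈ s) => wt_xR_pow_le (n := n) (e i)

lemma eq_sum_support_repP (hn : n ≠ 0) (f : R2 n) :
    f = ∑ i ∈ (repP f).support, xR n ^ i := by
  conv_lhs => rw [← mkR_repP hn f, (repP f).as_sum_support, map_sum]
  refine Finset.sum_congr rfl fun i hi => ?_
  have h : (repP f).coeff i = 1 :=
    (Fin.eq_one_of_ne_zero _ (mem_support_iff.1 hi) :)
  rw [h, monomial_one_right_eq_X_pow, map_pow, mkR_X]

lemma wt_mul_le (f g : R2 n) : wt (f * g) ≤ wt f * wt g := by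
  by_cases hn : n = 0
  · simp [wt, repP, hn]
  have h : f * g = ∑ ij ∈ (repP f).support ×ˢ (repP g).support, xR n ^ (ij.1 + ij.2) := by
    conv_lhs => rw [eq_sum_support_repP hn f, eq_sum_support_repP hn g, Finset.sum_mul_sum]
    simp [Finset.sum_product, pow_add]
  rw [h]
  exact (wt_sum_xR_pow_le _ _).trans_eq (Finset.card_product _ _)

lemma wt_PmR_self (hn : n ≠ 0) : wt (PmR n n) = n := by
  have h : PmR n n = mkR n (∑ i ∈ Finset.range n, X ^ i) := by
    simp [PmR, mkR_X]
  have hdeg : (∑ i ∈ Finset.range n, X ^ i : (ZMod 2)[X]).degree < n :=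
    (degree_sum_le _ _).trans_lt ((Finset.sup_lt_iff (WithBot.bot_lt_coe n)).2 fun i hi => by
      rw [degree_X_pow]; exact WithBot.coe_lt_coe.2 (Finset.mem_range.1 hi))
  have hsupp : (∑ i ∈ Finset.range n, X ^ i : (ZMod 2)[X]).support = Finset.range n := by
    ext k
    simp [coeff_X_pow]
  rw [wt, h, repP_mkR_of_degree_lt hn hdeg, hsupp, Finset.card_range]

end Weight

section AllOnes

variable {n : ℕ}

lemma R2_add_self (f : R2 n) : f + f = 0 := by
  rw [← two_mul, ← map_ofNat (algebraMap (ZMod 2) (R2 n)) 2,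
    show (OfNat.ofNat 2 : ZMod 2) = 0 from rfl, map_zero, zero_mul]

lemma PmR_add (k l : ℕ) : PmR n (k + l) = PmR n k + xR n ^ k * PmR n l := by
  simp [PmR, Finset.sum_range_add, pow_add, Finset.mul_sum]

lemma sum_range_pow_mul_mul_PmR (k d : ℕ) :
    (∑ i ∈ Finset.range k, xR n ^ (d * i)) * PmR n d = PmR n (d * k) := by
  induction k with
  | zero => simp [PmR]
  | succ k ih => rw [Finset.sum_range_succ, add_mul, ih, Nat.mul_succ, PmR_add]

lemma xR_mul_PmR_self : xR n * PmR n n = PmR n n := by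
  have h := PmR_add (n := n) 1 n
  rw [add_comm 1 n, PmR_add, xR_pow_n] at h
  simp only [PmR, Finset.sum_range_one, pow_zero, pow_one, one_mul] at h ⊢
  rw [add_comm] at h
  exact (add_left_cancel h).symm

lemma xR_pow_mul_PmR_self (k : ℕ) : xR n ^ k * PmR n n = PmR n n := by
  induction k with
  | zero => simp
  | succ k ih => rw [pow_succ, mul_assoc, xR_mul_PmR_self, ih]

lemma mul_PmR_self_of_mem_coset (r : R2 n) :
    (1 + r * (1 + xR n)) * PmR n n = PmR n n := by
  rw [add_mul, mul_assoc, add_mul 1, xR_mul_PmR_self, one_mul, R2_add_self, mul_zero, add_zero]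

/-- If `p + q·P_d` is the all-ones element and `w = 1 + r·(1+x)`, then `p·w + q·(w·P_d)` is
all-ones too, which bounds the weights of `w` and `w·P_d` from below. -/
lemma le_wt_mul_add_wt_mul (hn : n ≠ 0) {d : ℕ} {p q : R2 n}
    (h : p + q * PmR n d = PmR n n) (r : R2 n) :
    n ≤ wt p * wt (1 + r * (1 + xR n)) + wt q * wt ((1 + r * (1 + xR n)) * PmR n d) := by
  have key : p * (1 + r * (1 + xR n)) + q * ((1 + r * (1 + xR n)) * PmR n d) = PmR n n := by
    rw [← mul_PmR_self_of_mem_coset r, ← h]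
    ring
  calc n = wt (PmR n n) := (wt_PmR_self hn).symm
    _ ≤ _ := by
      rw [← key]
      exact (wt_add_le _ _).trans (add_le_add (wt_mul_le _ _) (wt_mul_le _ _))

lemma one_add_xR_dvd_one_add_pow (k : ℕ) : 1 + xR n ∣ 1 + xR n ^ k := by
  have h (f : R2 n) : 1 + f = f - 1 := by
    rw [eq_sub_iff_add_eq, add_assoc, add_comm f, ← add_assoc, R2_add_self, zero_add]
  rw [h, h]
  simpa using sub_dvd_pow_sub_pow (xR n) 1 k

lemma one_add_xR_dvd_natCast_add_sum {ι : Type*} (s : Finset ι) (e : ι → ℕ) :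
    1 + xR n ∣ (s.card : R2 n) + ∑ i ∈ s, xR n ^ e i := by
  have h : (s.card : R2 n) + ∑ i ∈ s, xR n ^ e i = ∑ i ∈ s, (1 + xR n ^ e i) := by
    simp [Finset.sum_add_distrib]
  rw [h]
  exact Finset.dvd_sum fun i _ => one_add_xR_dvd_one_add_pow _

lemma substHom_xR (d : ℕ) : substHom n d (xR n) = xR n ^ d := AdjoinRoot.lift_root _

end AllOnes

noncomputable section

/-- For the `[[d²+1, 2, d]]` GB code (`d ≥ 3` odd, `2n = d²+1`,
`a = 1+x`, `b = (1+x)·P_d(x)`), with `u, v` as in Statement 8: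
`(1, P_d) + (u, v) + (x·v(x^d), u(x^d)) ∈ C₂(a,b)` (so `(1, P_d)` represents the logical
class `IX = XI·XX`), every element of the coset `(1, P_d) + C₂(a,b)` has weight at least
`d+1`, and the minimum weight in this coset equals `d+1` (attained by `(1, P_d)`). -/
theorem stmt_9 (d n : ℕ) (hd : Odd d) (hd3 : 3 ≤ d) (hn : 2 * n = d ^ 2 + 1)
    (a b u v : R2 n) (ha : a = 1 + xR n) (hb : b = (1 + xR n) * PmR n d)
    (hu : u = ∑ i ∈ Finset.range ((d - 1) / 2), xR n ^ (d * i))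
    (hv : v = ∑ i ∈ Finset.Ico (n - (d + 1) / 2) n, xR n ^ i) :
    ((1 : R2 n), PmR n d) + (u, v) + (xR n * substHom n d v, substHom n d u) ∈
      C2set n a b ∧
    (∀ c ∈ C2set n a b,
      d + 1 ≤ wt (((1 : R2 n), PmR n d) + c).1 + wt (((1 : R2 n), PmR n d) + c).2) ∧
    sInf {k | ∃ c ∈ C2set n a b,
      wt (((1 : R2 n), PmR n d) + c).1 + wt (((1 : R2 n), PmR n d) + c).2 = k} = d + 1 := by
  obtain ⟨m, rfl⟩ := hd
  have hn_def : n = 2 * m ^ 2 + 2 * m + 1 := by linarith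
  have hm : (2 * m + 1 - 1) / 2 = m := by omega
  have hm' : (2 * m + 1 + 1) / 2 = m + 1 := by omega
  rw [hm] at hu
  rw [hm'] at hv
  have hn0 : n ≠ 0 := by omega
  have hlong : (2 * m + 1) * (m + 1) = n + m := by rw [hn_def]; ring
  have hshort : (2 * m + 1) * m + (m + 1) = n := by rw [hn_def]; ring
  have hv' : v = xR n ^ ((2 * m + 1) * m) * PmR n (m + 1) := by
    rw [hv, Finset.sum_Ico_eq_sum_range, show n - (m + 1) = (2 * m + 1) * m by omega,
      show n - (2 * m + 1) * m = m + 1 by omega]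
    simp [PmR, pow_add, Finset.mul_sum]
  have huv : v + u * PmR n (2 * m + 1) = PmR n n := by
    rw [hu, hv', sum_range_pow_mul_mul_PmR, add_comm, ← PmR_add, hshort]
  have hlong_sum : (∑ i ∈ Finset.range (m + 1), xR n ^ ((2 * m + 1) * i)) * PmR n (2 * m + 1)
      = PmR n n + PmR n m := by
    rw [sum_range_pow_mul_mul_PmR, hlong, PmR_add, xR_pow_n, one_mul]
  have hdual : PmR n m + (∑ i ∈ Finset.range (m + 1), xR n ^ ((2 * m + 1) * i)) *
      PmR n (2 * m + 1) = PmR n n := by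
    rw [hlong_sum, add_comm, add_assoc, R2_add_self, add_zero]
  have hsubst_u : substHom n (2 * m + 1) u =
      ∑ i ∈ Finset.range m, xR n ^ ((2 * m + 1) * ((2 * m + 1) * i)) := by
    simp [hu, substHom_xR, ← pow_mul]
  have hsubst_v : substHom n (2 * m + 1) v =
      xR n ^ ((2 * m + 1) * ((2 * m + 1) * m)) *
        ∑ i ∈ Finset.range (m + 1), xR n ^ ((2 * m + 1) * i) := by
    simp [hv', PmR, substHom_xR, ← pow_mul]
  have hreflect : xR n * xR n ^ ((2 * m + 1) * ((2 * m + 1) * m)) * PmR n m =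
      substHom n (2 * m + 1) u := by
    rw [hsubst_u, PmR, ← Finset.sum_range_reflect, Finset.mul_sum]
    refine Finset.sum_congr rfl fun i hi => ?_
    have hi' := Finset.mem_range.1 hi
    rw [← pow_succ', ← pow_add]
    refine xR_pow_eq_of_modEq ((Nat.modEq_iff_dvd).2 ⟨2 * i - 2 * m, ?_⟩)
    obtain ⟨j, rfl⟩ := Nat.exists_eq_add_of_lt hi'
    have : i + j + 1 - 1 - i = j := by omega
    rw [this, hn_def]
    push_cast
    ring
  have hrotated : xR n * substHom n (2 * m + 1) v * PmR n (2 * m + 1) +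
      substHom n (2 * m + 1) u = PmR n n := by
    rw [hsubst_v, ← mul_assoc, mul_assoc _ _ (PmR n (2 * m + 1)), hlong_sum, mul_add, hreflect,
      add_assoc, R2_add_self, add_zero, mul_assoc, xR_pow_mul_PmR_self, xR_mul_PmR_self]
  have hlower : ∀ c ∈ C2set n a b, 2 * m + 1 + 1 ≤
      wt (((1 : R2 n), PmR n (2 * m + 1)) + c).1 + wt (((1 : R2 n), PmR n (2 * m + 1)) + c).2 := by
    rintro _ ⟨r, rfl⟩
    have hsnd : PmR n (2 * m + 1) + r * b = (1 + r * (1 + xR n)) * PmR n (2 * m + 1) := by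
      rw [hb]; ring
    simp only [Prod.mk_add_mk, hsnd, ha]
    have h₁ := le_wt_mul_add_wt_mul hn0 huv r
    have h₂ := le_wt_mul_add_wt_mul hn0 hdual r
    have wt_u : wt u ≤ m := by
      rw [hu]; exact (wt_sum_xR_pow_le _ _).trans_eq (Finset.card_range m)
    have wt_v : wt v ≤ m + 1 := by
      rw [hv]; exact (wt_sum_xR_pow_le _ _).trans (by rw [Nat.card_Ico]; omega)
    have wt_p : wt (PmR n m) ≤ m := (wt_sum_xR_pow_le _ _).trans_eq (Finset.card_range m)
    have wt_q : wt (∑ i ∈ Finset.range (m + 1), xR n ^ ((2 * m + 1) * i)) ≤ m + 1 :=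
      (wt_sum_xR_pow_le _ _).trans_eq (Finset.card_range _)
    generalize wt (1 + r * (1 + xR n)) = s at *
    generalize wt ((1 + r * (1 + xR n)) * PmR n (2 * m + 1)) = t at *
    have h₁' := h₁.trans (add_le_add (Nat.mul_le_mul_right s wt_v) (Nat.mul_le_mul_right t wt_u))
    have h₂' := h₂.trans (add_le_add (Nat.mul_le_mul_right s wt_p) (Nat.mul_le_mul_right t wt_q))
    by_contra! hlt
    have hle : s + t ≤ 2 * m + 1 := by omega
    nlinarith [Nat.mul_le_mul_left (2 * m + 1) hle]
  refine ⟨?_, hlower, ?_⟩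
  · have hdvd : 1 + xR n ∣ 1 + u + xR n * substHom n (2 * m + 1) v := by
      have h₁ := one_add_xR_dvd_natCast_add_sum (n := n) (Finset.range m)
        fun i => (2 * m + 1) * i
      have h₂ := one_add_xR_dvd_natCast_add_sum (n := n) (Finset.range (m + 1))
        fun i => 1 + (2 * m + 1) * ((2 * m + 1) * m) + (2 * m + 1) * i
      rw [Finset.card_range] at h₁ h₂
      convert dvd_add h₁ h₂ using 1
      simp only [pow_add _ _ ((2 * m + 1) * _), ← Finset.mul_sum]
      rw [hsubst_v, hu, pow_one]
      push_cast
      linear_combination -R2_add_self (m : R2 n)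
    obtain ⟨r, hr⟩ := hdvd
    refine ⟨r, Prod.ext ?_ ?_⟩
    · simp only [Prod.mk_add_mk]
      rw [hr, ha, mul_comm]
    · simp only [Prod.mk_add_mk]
      rw [hb, ← mul_assoc, mul_comm r, ← hr]
      have h : u * PmR n (2 * m + 1) + xR n * substHom n (2 * m + 1) v * PmR n (2 * m + 1) =
          v + substHom n (2 * m + 1) u := by
        linear_combination huv + hrotated + R2_add_self (PmR n n) - R2_add_self v -
          R2_add_self (substHom n (2 * m + 1) u)
      linear_combination -h
  · have hmem : 2 * m + 1 + 1 ∈ {k | ∃ c ∈ C2set n a b,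
        wt (((1 : R2 n), PmR n (2 * m + 1)) + c).1 +
          wt (((1 : R2 n), PmR n (2 * m + 1)) + c).2 = k} := by
      have hzero : (0 : R2 n × R2 n) ∈ C2set n a b := ⟨0, by simp only [zero_mul]; rfl⟩
      refine ⟨0, hzero, le_antisymm ?_ (hlower 0 hzero)⟩
      have h₁ : wt (1 : R2 n) ≤ 1 := by simpa using wt_xR_pow_le (n := n) 0
      have h₂ : wt (PmR n (2 * m + 1)) ≤ 2 * m + 1 :=
        (wt_sum_xR_pow_le _ _).trans_eq (Finset.card_range _)
      simp only [add_zero]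
      omega
    refine le_antisymm (Nat.sInf_le hmem) (le_csInf ⟨_, hmem⟩ ?_)
    rintro _ ⟨c, hc, rfl⟩
    exact hlower c hc

end
end
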